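/- arXiv:1012.1790 — 2 statements merged into one kernel-verified Lean document; each statement's English description precedes it below -/
import Mathlib

section
/- Let A be an n×n matrix (n ≥ 3) with entries a_{ij} over a field. Let b_{11}, b_{12}, b_{21}, b_{22} be the determinants of the four (n−1)×(n−1) corner submatrices of A (obtained by deleting the last row and last column, the last row and first column, the first row and last column, and the first row and first column, respectively), and let B = b_{11}b_{22} − b_{12}b_{21}. Let C be the determinant of the central (n−2)×(n−2) submatrix of A obtained by deleting both the first and last rows and both the first and last columns. If C ≠ 0, then det A = B / C. -/
/-!
If `M` is a block matrix whose upper left block has order `k ≥ 1`, then the upper left block of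
`adjugate M` has determinant `det M ^ (k - 1) * det M₂₂` (Jacobi's theorem on complementary minors).
To see this, replace the right half of `adjugate M` by that of the identity matrix; multiplying `M`
by the result gives a block triangular matrix with diagonal blocks `det M • 1` and `M₂₂`. This
proves the formula up to a factor `det M`, which may be cancelled because it is enough to treat the
matrix of indeterminates over `ℤ`. The identity `B = det A * C` is the case `k = 2`: up to signs,
which cancel, the corner minors are the entries of `adjugate A` at the first and last indices.
-/

section JacobiComplementaryMinor

open Matrix

variable {l m n R : Type*} [Fintype l] [DecidableEq l] [Fintype m] [DecidableEq m]
  [Fintype n] [DecidableEq n] [CommRing R]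

theorem mul_fromBlocks_toBlocks_adjugate (M : Matrix (m ⊕ n) (m ⊕ n) R) :
    M * fromBlocks M.adjugate.toBlocks₁₁ 0 M.adjugate.toBlocks₂₁ 1 =
      fromBlocks (M.det • 1) M.toBlocks₁₂ 0 M.toBlocks₂₂ := by
  have h : fromBlocks M.toBlocks₁₁ M.toBlocks₁₂ M.toBlocks₂₁ M.toBlocks₂₂ *
      fromBlocks M.adjugate.toBlocks₁₁ M.adjugate.toBlocks₁₂
        M.adjugate.toBlocks₂₁ M.adjugate.toBlocks₂₂ = fromBlocks (M.det • 1) 0 0 (M.det • 1) := by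
    rw [fromBlocks_toBlocks, fromBlocks_toBlocks, mul_adjugate, ← fromBlocks_one, fromBlocks_smul,
      smul_zero, smul_zero]
  rw [fromBlocks_multiply, fromBlocks_inj] at h
  obtain ⟨h₁₁, -, h₂₁, -⟩ := h
  conv_lhs => enter [1]; rw [← fromBlocks_toBlocks M]
  simp only [fromBlocks_multiply, h₁₁, h₂₁, Matrix.mul_zero, Matrix.mul_one, zero_add]

theorem det_mul_det_toBlocks₁₁_adjugate (M : Matrix (m ⊕ n) (m ⊕ n) R) :
    M.det * M.adjugate.toBlocks₁₁.det = M.det ^ Fintype.card m * M.toBlocks₂₂.det := by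
  simpa only [det_mul, det_fromBlocks_zero₁₂, det_fromBlocks_zero₂₁, det_smul, det_one, mul_one]
    using congrArg det (mul_fromBlocks_toBlocks_adjugate M)

theorem det_toBlocks₁₁_adjugate [Nonempty m] (M : Matrix (m ⊕ n) (m ⊕ n) R) :
    M.adjugate.toBlocks₁₁.det = M.det ^ (Fintype.card m - 1) * M.toBlocks₂₂.det := by
  let X := mvPolynomialX (m ⊕ n) (m ⊕ n) ℤ
  have generic : X.adjugate.toBlocks₁₁.det = X.det ^ (Fintype.card m - 1) * X.toBlocks₂₂.det := by
    apply mul_left_cancel₀ (det_mvPolynomialX_ne_zero (m ⊕ n) ℤ)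
    rw [det_mul_det_toBlocks₁₁_adjugate, ← mul_assoc, mul_pow_sub_one Fintype.card_ne_zero]
  let φ := MvPolynomial.aeval (R := ℤ) fun p : (m ⊕ n) × (m ⊕ n) => M p.1 p.2
  have φ_X : φ.mapMatrix X = M := mvPolynomialX_mapMatrix_aeval ℤ M
  have specialized := congrArg φ generic
  rw [map_mul, map_pow, AlgHom.map_det, AlgHom.map_det, AlgHom.map_det] at specialized
  rw [← φ_X, ← AlgHom.map_adjugate]
  exact specialized

theorem det_submatrix_inl_adjugate [Nonempty m] (e : m ⊕ n ≃ l) (A : Matrix l l R) :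
    (A.adjugate.submatrix (e ∘ Sum.inl) (e ∘ Sum.inl)).det =
      A.det ^ (Fintype.card m - 1) * (A.submatrix (e ∘ Sum.inr) (e ∘ Sum.inr)).det := by
  have h := det_toBlocks₁₁_adjugate (A.submatrix e e)
  rwa [adjugate_submatrix_equiv_self, det_submatrix_equiv_self] at h

end JacobiComplementaryMinor

theorem bijective_sumElim_ends_interior (n : ℕ) :
    Function.Bijective
      (Sum.elim ![0, Fin.last (n + 1)] fun i : Fin n => i.succ.castSucc) := by
  rw [Fintype.bijective_iff_surjective_and_card]
  refine ⟨fun k => ?_, by simp only [Fintype.card_sum, Fintype.card_fin]; omega⟩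
  induction k using Fin.lastCases with
  | last => exact ⟨Sum.inl 1, rfl⟩
  | cast k =>
    cases k using Fin.cases with
    | zero => exact ⟨Sum.inl 0, rfl⟩
    | succ i => exact ⟨Sum.inr i, rfl⟩

theorem det_submatrix_ends_adjugate {R : Type*} [CommRing R] (n : ℕ)
    (A : Matrix (Fin (n + 2)) (Fin (n + 2)) R) :
    (A.adjugate.submatrix ![0, Fin.last (n + 1)] ![0, Fin.last (n + 1)]).det =
      (A.submatrix Fin.castSucc Fin.castSucc).det * (A.submatrix Fin.succ Fin.succ).det
        - (A.submatrix Fin.castSucc Fin.succ).det * (A.submatrix Fin.succ Fin.castSucc).det := by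
  have sign_sq : ((-1 : R) ^ (n + 1)) * (-1) ^ (n + 1) = 1 := by
    rw [← mul_pow, neg_one_mul, neg_neg, one_pow]
  simp only [Matrix.det_fin_two, Matrix.submatrix_apply, Matrix.cons_val_zero, Matrix.cons_val_one,
    Matrix.adjugate_fin_succ_eq_det_submatrix, Fin.succAbove_zero, Fin.succAbove_last,
    Fin.val_zero, Fin.val_last, zero_add, add_zero, pow_zero, pow_add (-1 : R) (n + 1) (n + 1)]
  linear_combination
    ((A.submatrix Fin.castSucc Fin.castSucc).det * (A.submatrix Fin.succ Fin.succ).det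
      - (A.submatrix Fin.castSucc Fin.succ).det * (A.submatrix Fin.succ Fin.castSucc).det) * sign_sq

/-- The **Desnanot–Jacobi identity**, on which Dodgson condensation rests. -/
theorem stmt_3_general {R : Type*} [CommRing R] (n : ℕ)
    (A : Matrix (Fin (n + 2)) (Fin (n + 2)) R) :
    A.det * (A.submatrix (fun i : Fin n => i.succ.castSucc)
        (fun j : Fin n => j.succ.castSucc)).det =
      (A.submatrix Fin.castSucc Fin.castSucc).det * (A.submatrix Fin.succ Fin.succ).det
        - (A.submatrix Fin.castSucc Fin.succ).det * (A.submatrix Fin.succ Fin.castSucc).det := by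
  have jacobi := det_submatrix_inl_adjugate
    (Equiv.ofBijective _ (bijective_sumElim_ends_interior n)) A
  simp only [Equiv.coe_ofBijective, Sum.elim_comp_inl, Sum.elim_comp_inr, Fintype.card_fin,
    Nat.add_one_sub_one, pow_one] at jacobi
  rw [← jacobi, det_submatrix_ends_adjugate]

/-- Reduction step over a field: for an `(n+3) × (n+3)` matrix `A` over a field whose
central minor `C` (of order `n+1`) is nonzero, `det A = B / C` where `B` is the 2×2
determinant of the four corner minors of order `n+2`. -/
theorem stmt_3 {K : Type*} [Field K] (n : ℕ)
    (A : Matrix (Fin (n + 3)) (Fin (n + 3)) K)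
    (B C : K)
    (hB : B = (A.submatrix Fin.castSucc Fin.castSucc).det * (A.submatrix Fin.succ Fin.succ).det
      - (A.submatrix Fin.castSucc Fin.succ).det * (A.submatrix Fin.succ Fin.castSucc).det)
    (hC : C = (A.submatrix (fun i : Fin (n + 1) => i.succ.castSucc)
        (fun j : Fin (n + 1) => j.succ.castSucc)).det)
    (hC0 : C ≠ 0) :
    A.det = B / C := by
  rw [eq_div_iff hC0, hB, hC]
  exact stmt_3_general (n + 1) A
end

section
/- Let A be an n×n matrix (n ≥ 2) with entries a_{ij} over a field, and fix indices r, s with 1 ≤ r, s ≤ n such that a_{rs} ≠ 0. For every pair of indices i ≠ r and j ≠ s, define b_{ij} = σ_{ij}·(a_{ij}a_{rs} − a_{is}a_{rj}), where σ_{ij} = +1 if (r − i) and (s − j) have the same sign and σ_{ij} = −1 otherwise, and let B be the determinant of the (n−1)×(n−1) matrix with entries b_{ij} (rows indexed by i ≠ r and columns by j ≠ s, in increasing order). Then det A = B / (a_{rs})^{n−2}. -/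
/-!
Let `A` have size `n + 2`. Multiply every row of `A` other than row `r` by the pivot `a = A r s`,
then subtract `A i s` times row `r` from row `i`. Column `s` is now zero outside row `r`, and
Laplace expansion along it gives `a ^ (n + 1) * det A = (-1) ^ (r + s) * a * det M` with `M` the
matrix of the minors `A i j * a - A i s * A r j` for `i ≠ r`, `j ≠ s`. The factor `a` cancels when
it is regular, in particular for the matrix over `R[X]` obtained by adding `X` to the pivot;
evaluating at `X = 0` removes the assumption on `a`. Finally, the sign of `(r - i) * (s - j)`
splits into a row sign and a column sign, and these multiply up to `(-1) ^ r` and `(-1) ^ s`.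
-/

open Matrix Polynomial

section PivotMinors

variable {m n R S : Type*} [CommRing R] [CommRing S]

/-- The matrix of `2 × 2` minors of `A` on rows `r, i` and columns `s, j`, signed so that the
product `A i j * A r s` occurs positively. It keeps the row `r` and the column `s`, which vanish;
Chiò's condensed matrix is the submatrix without them. -/
def pivotMinors (A : Matrix m n R) (r : m) (s : n) : Matrix m n R :=
  of fun i j => A i j * A r s - A i s * A r j

theorem pivotMinors_apply (A : Matrix m n R) (r : m) (s : n) (i : m) (j : n) :
    pivotMinors A r s i j = A i j * A r s - A i s * A r j :=
  rfl

theorem pivotMinors_apply_pivot_col (A : Matrix m n R) (r : m) (s : n) (i : m) :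
    pivotMinors A r s i s = 0 :=
  sub_self _

theorem pivotMinors_map (f : R →+* S) (A : Matrix m n R) (r : m) (s : n) :
    pivotMinors (A.map f) r s = (pivotMinors A r s).map f := by
  ext i j
  simp only [pivotMinors_apply, map_apply, map_sub, map_mul]

theorem det_pivotMinors_updateRow [Fintype m] [DecidableEq m] (A : Matrix m m R) (r s : m) :
    ((pivotMinors A r s).updateRow r (A r)).det = A r s ^ (Fintype.card m - 1) * A.det := by
  let scale : m → R := fun i => if i = r then 1 else A r s
  have prod_scale : ∏ i, scale i = A r s ^ (Fintype.card m - 1) := by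
    simp [scale, Finset.prod_ite, Finset.filter_ne', Finset.card_erase_of_mem]
  rw [← prod_scale, ← det_mul_column]
  refine det_eq_of_forall_row_eq_smul_add_const (fun i => if i = r then 0 else -A i s) r
    (if_pos rfl) fun i j => ?_
  by_cases hi : i = r
  · simp [scale, hi]
  · simp only [updateRow_ne hi, pivotMinors_apply, of_apply, scale, if_neg hi, if_true]
    ring

end PivotMinors

section Condensation

variable {R : Type*} [CommRing R] {n : ℕ}

theorem det_eq_of_col_eq_zero_of_ne (M : Matrix (Fin (n + 1)) (Fin (n + 1)) R)
    (r s : Fin (n + 1)) (hM : ∀ i ≠ r, M i s = 0) :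
    M.det = (-1) ^ (r + s : ℕ) * M r s * (M.submatrix r.succAbove s.succAbove).det := by
  rw [det_succ_column M s, Finset.sum_eq_single r]
  · intro i _ hi
    rw [hM i hi, mul_zero, zero_mul]
  · simp

theorem pow_mul_det_eq_pivot_mul_det_pivotMinors (A : Matrix (Fin (n + 1)) (Fin (n + 1)) R)
    (r s : Fin (n + 1)) :
    A r s ^ n * A.det = A r s *
      ((-1) ^ (r + s : ℕ) * ((pivotMinors A r s).submatrix r.succAbove s.succAbove).det) := by
  have col_zero : ∀ i ≠ r, (pivotMinors A r s).updateRow r (A r) i s = 0 := fun i hi => by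
    rw [updateRow_ne hi, pivotMinors_apply_pivot_col]
  have expansion := det_eq_of_col_eq_zero_of_ne _ r s col_zero
  rw [det_pivotMinors_updateRow, Fintype.card_fin, Nat.add_sub_cancel, updateRow_self,
    submatrix_updateRow_succAbove] at expansion
  rw [expansion]
  ring

theorem pow_mul_det_eq_det_pivotMinors_of_isLeftRegular (A : Matrix (Fin (n + 2)) (Fin (n + 2)) R)
    (r s : Fin (n + 2)) (hrs : IsLeftRegular (A r s)) :
    A r s ^ n * A.det =
      (-1) ^ (r + s : ℕ) * ((pivotMinors A r s).submatrix r.succAbove s.succAbove).det := by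
  apply hrs
  simpa only [pow_succ', mul_assoc] using pow_mul_det_eq_pivot_mul_det_pivotMinors A r s

theorem pow_mul_det_eq_det_pivotMinors (A : Matrix (Fin (n + 2)) (Fin (n + 2)) R)
    (r s : Fin (n + 2)) :
    A r s ^ n * A.det =
      (-1) ^ (r + s : ℕ) * ((pivotMinors A r s).submatrix r.succAbove s.succAbove).det := by
  let P : Matrix (Fin (n + 2)) (Fin (n + 2)) R[X] := A.map C + single r s X
  have pivot_regular : IsLeftRegular (P r s) := by
    simpa [P, add_comm] using (monic_X_add_C (A r s)).isRegular.left
  have eval_P : P.map (evalRingHom 0) = A := by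
    ext i j
    simp [P, single_apply, apply_ite (eval (0 : R))]
  have eval_pivot : evalRingHom 0 (P r s) = A r s := congr_fun₂ eval_P r s
  have identity := congr_arg (evalRingHom 0)
    (pow_mul_det_eq_det_pivotMinors_of_isLeftRegular P r s pivot_regular)
  simpa only [map_mul, map_pow, map_neg, map_one, RingHom.map_det, RingHom.mapMatrix_apply,
    ← submatrix_map, ← pivotMinors_map, eval_P, eval_pivot] using identity

end Condensation

section Signs

theorem ite_mul_pos_eq_mul {α R : Type*} [Ring α] [LinearOrder α] [IsStrictOrderedRing α]
    [Ring R] {x y : α} (hx : x ≠ 0) (hy : y ≠ 0) :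
    (if 0 < x * y then (1 : R) else -1) =
      (if 0 < x then -1 else 1) * (if 0 < y then -1 else 1) := by
  rcases hx.lt_or_gt with hx | hx <;> rcases hy.lt_or_gt with hy | hy
  · simp [mul_pos_of_neg_of_neg hx hy, hx.not_gt, hy.not_gt]
  · simp [(mul_neg_of_neg_of_pos hx hy).not_gt, hx.not_gt, hy]
  · simp [(mul_neg_of_pos_of_neg hx hy).not_gt, hx, hy.not_gt]
  · simp [mul_pos hx hy, hx, hy]

theorem prod_ite_succAbove_lt {M : Type*} [CommMonoid M] {n : ℕ} (a : M) (r : Fin (n + 1)) :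
    ∏ i : Fin n, (if r.succAbove i < r then a else 1) = a ^ (r : ℕ) := by
  calc ∏ i : Fin n, (if r.succAbove i < r then a else 1)
      = ∏ i : Fin (n + 1), (if i < r then a else 1) := by simp [Fin.prod_univ_succAbove _ r]
    _ = a ^ (r : ℕ) := by simp [Finset.prod_ite, Finset.filter_gt_eq_Iio]

theorem ite_sub_succAbove_mul_pos {R : Type*} [Ring R] {m n : ℕ} (r : Fin (m + 1))
    (s : Fin (n + 1)) (i : Fin m) (j : Fin n) :
    (if (0 : ℤ) < (((r : ℕ) : ℤ) - ((r.succAbove i : ℕ) : ℤ))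
          * (((s : ℕ) : ℤ) - ((s.succAbove j : ℕ) : ℤ)) then (1 : R) else -1) =
      (if r.succAbove i < r then -1 else 1) * (if s.succAbove j < s then -1 else 1) := by
  have sub_ne_zero_of_succAbove {k : ℕ} (t : Fin (k + 1)) (l : Fin k) :
      ((t : ℕ) : ℤ) - ((t.succAbove l : ℕ) : ℤ) ≠ 0 :=
    sub_ne_zero.mpr <| mod_cast Fin.val_ne_of_ne (t.succAbove_ne l).symm
  rw [ite_mul_pos_eq_mul (sub_ne_zero_of_succAbove r i) (sub_ne_zero_of_succAbove s j)]
  simp only [sub_pos, Nat.cast_lt, Fin.val_fin_lt]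

theorem det_of_row_mul_col_mul {ι R : Type*} [Fintype ι] [DecidableEq ι] [CommRing R]
    (u v : ι → R) (M : Matrix ι ι R) :
    (of fun i j => u i * v j * M i j).det = (∏ i, u i) * (∏ j, v j) * M.det := by
  rw [mul_assoc, ← det_mul_row, ← det_mul_column]
  simp only [mul_assoc, of_apply]

end Signs

theorem stmt_6_general {R : Type*} [CommRing R] {n : ℕ}
    (A : Matrix (Fin (n + 2)) (Fin (n + 2)) R) (r s : Fin (n + 2)) :
    A r s ^ n * A.det = Matrix.det (fun i j : Fin (n + 1) =>
      (if (0 : ℤ) < (((r : ℕ) : ℤ) - ((r.succAbove i : ℕ) : ℤ))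
            * (((s : ℕ) : ℤ) - ((s.succAbove j : ℕ) : ℤ)) then (1 : R) else -1)
        * (A (r.succAbove i) (s.succAbove j) * A r s
            - A (r.succAbove i) s * A r (s.succAbove j))) := by
  simp only [ite_sub_succAbove_mul_pos]
  rw [pow_mul_det_eq_det_pivotMinors, pow_add, ← prod_ite_succAbove_lt (-1) r,
    ← prod_ite_succAbove_lt (-1) s]
  exact (det_of_row_mul_col_mul _ _ _).symm

/-- Chiò pivotal condensation over a field, solved for `det A`: for an `(n+2) × (n+2)`
matrix `A` over a field with pivot `a_{rs} ≠ 0`, `det A = B / a_{rs} ^ n`, where `B` is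
the determinant of the `(n+1) × (n+1)` matrix indexed by rows `≠ r` and columns `≠ s`
(in increasing order, via `Fin.succAbove`), with entries
`σᵢⱼ (aᵢⱼ a_{rs} − a_{is} a_{rj})`, `σᵢⱼ` being the sign of `(r − i)(s − j)`. -/
theorem stmt_6 {K : Type*} [Field K] (n : ℕ)
    (A : Matrix (Fin (n + 2)) (Fin (n + 2)) K)
    (r s : Fin (n + 2)) (hrs : A r s ≠ 0)
    (B : K)
    (hB : B = (Matrix.det (fun i j : Fin (n + 1) =>
      (if (0 : ℤ) < (((r : ℕ) : ℤ) - ((r.succAbove i : ℕ) : ℤ))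
            * (((s : ℕ) : ℤ) - ((s.succAbove j : ℕ) : ℤ)) then (1 : K) else -1)
        * (A (r.succAbove i) (s.succAbove j) * A r s
            - A (r.succAbove i) s * A r (s.succAbove j))))) :
    A.det = B / A r s ^ n := by
  rw [hB, ← stmt_6_general, mul_div_cancel_left₀ _ (pow_ne_zero n hrs)]
end
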